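/- Let X1, X2 be rank-one K-projections and α, β real numbers such that γ := (1+α)(1+β) − αβ·tr(X1 K X2 K) ≠ 0. Then the m×m matrix 1_m + α X1 K + β X2 K is invertible, with inverse 1_m − (α(1+β)/γ) X1 K − ((1+α)β/γ) X2 K + (αβ/γ)(X1 K X2 K + X2 K X1 K). -/

import Mathlib

open Matrix

/-- The space of real `m × n` matrices. -/
abbrev Mat (m n : ℕ) := Matrix (Fin m) (Fin n) ℝ

/-- `X` is a rank-one `K`-projection, i.e. `X ∈ S`. -/
def InS {m n : ℕ} (K : Matrix (Fin n) (Fin m) ℝ) (X : Mat m n) : Prop :=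
  X * K * X = X ∧ X.rank = 1

/-- `A(p,q,λ,X) = 1ₘ − ((p−q)/(λ−q)) X K`. -/
noncomputable def Amat {m n : ℕ} (K : Matrix (Fin n) (Fin m) ℝ) (p q lam : ℝ) (X : Mat m n) :
    Matrix (Fin m) (Fin m) ℝ :=
  1 - ((p - q) / (lam - q)) • (X * K)

/-- `Ã(p,q,λ,X) = 1ₙ − ((p−q)/(λ−q)) K X`. -/
noncomputable def Atil {m n : ℕ} (K : Matrix (Fin n) (Fin m) ℝ) (p q lam : ℝ) (X : Mat m n) :
    Matrix (Fin n) (Fin n) ℝ :=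
  1 - ((p - q) / (lam - q)) • (K * X)

/-- `B(p,q,λ,X) = 1ₘ + ((p−q)/(λ−p)) X K`. -/
noncomputable def Bmat {m n : ℕ} (K : Matrix (Fin n) (Fin m) ℝ) (p q lam : ℝ) (X : Mat m n) :
    Matrix (Fin m) (Fin m) ℝ :=
  1 + ((p - q) / (lam - p)) • (X * K)

/-- `B̃(p,q,λ,X) = 1ₙ + ((p−q)/(λ−p)) K X`. -/
noncomputable def Btil {m n : ℕ} (K : Matrix (Fin n) (Fin m) ℝ) (p q lam : ℝ) (X : Mat m n) :
    Matrix (Fin n) (Fin n) ℝ :=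
  1 + ((p - q) / (lam - p)) • (K * X)

/-- `α₁₂⁻¹ = 1 − ((p1−q1)(p2−q2))/((p2−p1)(q2−q1)) · tr(K X1 K X2)`. -/
noncomputable def adenom {m n : ℕ} (K : Matrix (Fin n) (Fin m) ℝ) (p1 q1 p2 q2 : ℝ)
    (X1 X2 : Mat m n) : ℝ :=
  1 - (p1 - q1) * (p2 - q2) / ((p2 - p1) * (q2 - q1)) * (K * X1 * K * X2).trace

/-- The Yang–Baxter map `R(p1,q1;p2,q2)`. -/
noncomputable def Rmap {m n : ℕ} (K : Matrix (Fin n) (Fin m) ℝ) (p1 q1 p2 q2 : ℝ)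
    (X : Mat m n × Mat m n) : Mat m n × Mat m n :=
  ((adenom K p1 q1 p2 q2 X.1 X.2)⁻¹ •
      ((1 - ((p2 - q2) / (p2 - p1)) • (X.2 * K)) * X.1 *
        (1 - ((p2 - q2) / (q1 - q2)) • (K * X.2))),
   (adenom K p1 q1 p2 q2 X.1 X.2)⁻¹ •
      ((1 - ((p1 - q1) / (q2 - q1)) • (X.1 * K)) * X.2 *
        (1 - ((p1 - q1) / (p1 - p2)) • (K * X.1))))

/-- Trace denominator of the first component of the map `T`:
`tr[A₂(p1,X2) X1 B̃₂(q1,X2) K]`. -/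
noncomputable def Tden1 {m n : ℕ} (K : Matrix (Fin n) (Fin m) ℝ) (p1 q1 p2 q2 : ℝ)
    (X1 X2 : Mat m n) : ℝ :=
  (Amat K p2 q2 p1 X2 * X1 * Btil K p2 q2 q1 X2 * K).trace

/-- Trace denominator of the second component of the map `T`:
`tr[A₁(p2,X1) X2 B̃₁(q2,X1) K]`. -/
noncomputable def Tden2 {m n : ℕ} (K : Matrix (Fin n) (Fin m) ℝ) (p1 q1 p2 q2 : ℝ)
    (X1 X2 : Mat m n) : ℝ :=
  (Amat K p1 q1 p2 X1 * X2 * Btil K p1 q1 q2 X1 * K).trace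

/-- The (non-Yang–Baxter) map `T(p1,q1;p2,q2)`. -/
noncomputable def Tmap {m n : ℕ} (K : Matrix (Fin n) (Fin m) ℝ) (p1 q1 p2 q2 : ℝ)
    (X : Mat m n × Mat m n) : Mat m n × Mat m n :=
  ((Tden1 K p1 q1 p2 q2 X.1 X.2)⁻¹ • (Amat K p2 q2 p1 X.2 * X.1 * Btil K p2 q2 q1 X.2),
   (Tden2 K p1 q1 p2 q2 X.1 X.2)⁻¹ • (Amat K p1 q1 p2 X.1 * X.2 * Btil K p1 q1 q2 X.1))

/-- Trace denominator of the first component of `T⁻¹`: `tr[B₂(q1,X2) X1 Ã₂(p1,X2) K]`. -/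
noncomputable def Tinvden1 {m n : ℕ} (K : Matrix (Fin n) (Fin m) ℝ) (p1 q1 p2 q2 : ℝ)
    (X1 X2 : Mat m n) : ℝ :=
  (Bmat K p2 q2 q1 X2 * X1 * Atil K p2 q2 p1 X2 * K).trace

/-- Trace denominator of the second component of `T⁻¹`: `tr[B₁(q2,X1) X2 Ã₁(p2,X1) K]`. -/
noncomputable def Tinvden2 {m n : ℕ} (K : Matrix (Fin n) (Fin m) ℝ) (p1 q1 p2 q2 : ℝ)
    (X1 X2 : Mat m n) : ℝ :=
  (Bmat K p1 q1 q2 X1 * X2 * Atil K p1 q1 p2 X1 * K).trace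

/-- The map `Tinv(p1,q1;p2,q2)`, the inverse of `T(p1,q1;p2,q2)`. -/
noncomputable def Tinvmap {m n : ℕ} (K : Matrix (Fin n) (Fin m) ℝ) (p1 q1 p2 q2 : ℝ)
    (X : Mat m n × Mat m n) : Mat m n × Mat m n :=
  ((Tinvden1 K p1 q1 p2 q2 X.1 X.2)⁻¹ • (Bmat K p2 q2 q1 X.2 * X.1 * Atil K p2 q2 p1 X.2),
   (Tinvden2 K p1 q1 p2 q2 X.1 X.2)⁻¹ • (Bmat K p1 q1 q2 X.1 * X.2 * Atil K p1 q1 p2 X.1))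

/-- Trace denominator of the first component of `R⁻¹`: `tr[A₂(q1,X2) X1 B̃₂(p1,X2) K]`. -/
noncomputable def Rinvden1 {m n : ℕ} (K : Matrix (Fin n) (Fin m) ℝ) (p1 q1 p2 q2 : ℝ)
    (X1 X2 : Mat m n) : ℝ :=
  (Amat K p2 q2 q1 X2 * X1 * Btil K p2 q2 p1 X2 * K).trace

/-- Trace denominator of the second component of `R⁻¹`: `tr[B₁(p2,X1) X2 Ã₁(q2,X1) K]`. -/
noncomputable def Rinvden2 {m n : ℕ} (K : Matrix (Fin n) (Fin m) ℝ) (p1 q1 p2 q2 : ℝ)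
    (X1 X2 : Mat m n) : ℝ :=
  (Bmat K p1 q1 p2 X1 * X2 * Atil K p1 q1 q2 X1 * K).trace

/-- The map `Rinv(p1,q1;p2,q2)`, the inverse of `R(p1,q1;p2,q2)`. -/
noncomputable def Rinvmap {m n : ℕ} (K : Matrix (Fin n) (Fin m) ℝ) (p1 q1 p2 q2 : ℝ)
    (X : Mat m n × Mat m n) : Mat m n × Mat m n :=
  ((Rinvden1 K p1 q1 p2 q2 X.1 X.2)⁻¹ • (Amat K p2 q2 q1 X.2 * X.1 * Btil K p2 q2 p1 X.2),
   (Rinvden2 K p1 q1 p2 q2 X.1 X.2)⁻¹ • (Bmat K p1 q1 p2 X.1 * X.2 * Atil K p1 q1 q2 X.1))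

/-- `R` acting on components 1 and 2 of a triple. -/
noncomputable def R12t {m n : ℕ} (K : Matrix (Fin n) (Fin m) ℝ) (p1 q1 p2 q2 : ℝ)
    (X : Mat m n × Mat m n × Mat m n) : Mat m n × Mat m n × Mat m n :=
  ((Rmap K p1 q1 p2 q2 (X.1, X.2.1)).1, (Rmap K p1 q1 p2 q2 (X.1, X.2.1)).2, X.2.2)

/-- `R` acting on components 1 and 3 of a triple. -/
noncomputable def R13t {m n : ℕ} (K : Matrix (Fin n) (Fin m) ℝ) (p1 q1 p3 q3 : ℝ)
    (X : Mat m n × Mat m n × Mat m n) : Mat m n × Mat m n × Mat m n :=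
  ((Rmap K p1 q1 p3 q3 (X.1, X.2.2)).1, X.2.1, (Rmap K p1 q1 p3 q3 (X.1, X.2.2)).2)

/-- `R` acting on components 2 and 3 of a triple. -/
noncomputable def R23t {m n : ℕ} (K : Matrix (Fin n) (Fin m) ℝ) (p2 q2 p3 q3 : ℝ)
    (X : Mat m n × Mat m n × Mat m n) : Mat m n × Mat m n × Mat m n :=
  (X.1, Rmap K p2 q2 p3 q3 (X.2.1, X.2.2))

/-- `T` acting on components 1 and 2 of a triple. -/
noncomputable def T12t {m n : ℕ} (K : Matrix (Fin n) (Fin m) ℝ) (p1 q1 p2 q2 : ℝ)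
    (X : Mat m n × Mat m n × Mat m n) : Mat m n × Mat m n × Mat m n :=
  ((Tmap K p1 q1 p2 q2 (X.1, X.2.1)).1, (Tmap K p1 q1 p2 q2 (X.1, X.2.1)).2, X.2.2)

/-- `T` acting on components 1 and 3 of a triple. -/
noncomputable def T13t {m n : ℕ} (K : Matrix (Fin n) (Fin m) ℝ) (p1 q1 p3 q3 : ℝ)
    (X : Mat m n × Mat m n × Mat m n) : Mat m n × Mat m n × Mat m n :=
  ((Tmap K p1 q1 p3 q3 (X.1, X.2.2)).1, X.2.1, (Tmap K p1 q1 p3 q3 (X.1, X.2.2)).2)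

/-- `T` acting on components 2 and 3 of a triple. -/
noncomputable def T23t {m n : ℕ} (K : Matrix (Fin n) (Fin m) ℝ) (p2 q2 p3 q3 : ℝ)
    (X : Mat m n × Mat m n × Mat m n) : Mat m n × Mat m n × Mat m n :=
  (X.1, Tmap K p2 q2 p3 q3 (X.2.1, X.2.2))

/-- `T⁻¹` acting on components 2 and 3 of a triple. -/
noncomputable def Tinv23t {m n : ℕ} (K : Matrix (Fin n) (Fin m) ℝ) (p2 q2 p3 q3 : ℝ)
    (X : Mat m n × Mat m n × Mat m n) : Mat m n × Mat m n × Mat m n :=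
  (X.1, Tinvmap K p2 q2 p3 q3 (X.2.1, X.2.2))

/-- `R⁻¹` acting on components 2 and 3 of a triple. -/
noncomputable def Rinv23t {m n : ℕ} (K : Matrix (Fin n) (Fin m) ℝ) (p2 q2 p3 q3 : ℝ)
    (X : Mat m n × Mat m n × Mat m n) : Mat m n × Mat m n × Mat m n :=
  (X.1, Rinvmap K p2 q2 p3 q3 (X.2.1, X.2.2))

/-!
Only the matrices `P = X₁ K` and `Q = X₂ K` enter. They are idempotent of rank at most one, so
`P Q P = t P` and `Q P Q = t Q` with `t = tr (P Q)`, and hence `1, P, Q, P Q, Q P` span a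
subalgebra. The element `Y = γ (1 + α P + β Q)⁻¹` is found there by solving a linear system; it
satisfies `P Y = (1 + β) P - β P Q` and `Q Y = (1 + α) Q - α Q P`, so that in
`(1 + α P + β Q) Y = Y + α P Y + β Q Y` everything but the scalar `γ` cancels.
-/

section RankOne

variable {m n R F : Type*} [Fintype n]

theorem exists_eq_vecMulVec_of_rank_le_one [Field F] {X : Matrix m n F} (hX : X.rank ≤ 1) :
    ∃ (u : m → F) (v : n → F), X = vecMulVec u v := by
  classical
  obtain ⟨u, hu⟩ := finrank_le_one_iff.mp hX
  choose v hv using fun j => hu ⟨X *ᵥ Pi.single j 1, Pi.single j 1, rfl⟩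
  have hcol (j : n) : v j • (u : m → F) = X.col j := by
    simpa using congrArg Subtype.val (hv j)
  refine ⟨u, v, Matrix.ext fun i j => ?_⟩
  calc X i j = v j * u.1 i := (congrFun (hcol j) i).symm
    _ = vecMulVec u.1 v i j := mul_comm _ _

variable [Fintype m]

theorem vecMulVec_mul_mul_vecMulVec_self [CommSemiring R] (u : m → R) (v : n → R)
    (M : Matrix n m R) :
    vecMulVec u v * M * vecMulVec u v = (vecMulVec u v * M).trace • vecMulVec u v := by
  rw [vecMulVec_mul, vecMulVec_mul_vecMulVec, trace_vecMulVec, dotProduct_comm u, vecMulVec_smul]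

theorem mul_mul_self_eq_trace_smul_of_rank_le_one [Field F] {X : Matrix m n F}
    (hX : X.rank ≤ 1) (M : Matrix n m F) : X * M * X = (X * M).trace • X := by
  obtain ⟨u, v, rfl⟩ := exists_eq_vecMulVec_of_rank_le_one hX
  exact vecMulVec_mul_mul_vecMulVec_self u v M

theorem isIdempotentElem_mul_of_mul_mul_self_eq [NonUnitalSemiring R] {X : Matrix m n R}
    {K : Matrix n m R} (h : X * K * X = X) : IsIdempotentElem (X * K) := by
  rw [IsIdempotentElem, ← Matrix.mul_assoc, h]

end RankOne

section PencilAdjugate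

variable {R A : Type*} [CommRing R] [Ring A] [Algebra R A]

/-- The analogue of the adjugate for the element `1 + a P + b Q` of an algebra, where `P` and `Q`
are idempotents with `P Q P = t P` and `Q P Q = t Q`; the scalar `(1 + a) (1 + b) - a b t` takes
the place of the determinant. -/
def pencilAdjugate (a b t : R) (P Q : A) : A :=
  ((1 + a) * (1 + b) - a * b * t) • (1 : A) - (a * (1 + b)) • P - ((1 + a) * b) • Q
    + (a * b) • (P * Q + Q * P)

theorem pencilAdjugate_swap (a b t : R) (P Q : A) :
    pencilAdjugate b a t Q P = pencilAdjugate a b t P Q := by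
  unfold pencilAdjugate
  match_scalars <;> ring

theorem mul_pencilAdjugate_left {t : R} {P Q : A} (a b : R) (hP : IsIdempotentElem P)
    (hPQP : P * Q * P = t • P) :
    P * pencilAdjugate a b t P Q = (1 + b) • P - b • (P * Q) := by
  have hPPQ : P * (P * Q) = P * Q := by rw [← mul_assoc, hP.eq]
  have hPQP' : P * (Q * P) = t • P := by rw [← mul_assoc, hPQP]
  simp only [pencilAdjugate, mul_add, mul_sub, mul_smul_comm, mul_one, hP.eq, hPPQ, hPQP']
  match_scalars <;> ring

theorem mul_pencilAdjugate_right {t : R} {P Q : A} (a b : R) (hQ : IsIdempotentElem Q)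
    (hQPQ : Q * P * Q = t • Q) :
    Q * pencilAdjugate a b t P Q = (1 + a) • Q - a • (Q * P) := by
  rw [← pencilAdjugate_swap, mul_pencilAdjugate_left b a hQ hQPQ]

theorem one_add_smul_add_smul_mul_pencilAdjugate {t : R} {P Q : A} (a b : R)
    (hP : IsIdempotentElem P) (hQ : IsIdempotentElem Q)
    (hPQP : P * Q * P = t • P) (hQPQ : Q * P * Q = t • Q) :
    (1 + a • P + b • Q) * pencilAdjugate a b t P Q =
      ((1 + a) * (1 + b) - a * b * t) • (1 : A) := by
  calc (1 + a • P + b • Q) * pencilAdjugate a b t P Q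
      = pencilAdjugate a b t P Q + a • (P * pencilAdjugate a b t P Q)
          + b • (Q * pencilAdjugate a b t P Q) := by
        simp only [add_mul, one_mul, smul_mul_assoc]
    _ = pencilAdjugate a b t P Q + a • ((1 + b) • P - b • (P * Q))
          + b • ((1 + a) • Q - a • (Q * P)) := by
        rw [mul_pencilAdjugate_left a b hP hPQP, mul_pencilAdjugate_right a b hQ hQPQ]
    _ = ((1 + a) * (1 + b) - a * b * t) • (1 : A) := by
        unfold pencilAdjugate
        match_scalars <;> ring

theorem inv_smul_pencilAdjugate {F A : Type*} [Field F] [Ring A] [Algebra F A] {a b t g : F}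
    (hg : g = (1 + a) * (1 + b) - a * b * t) (hg0 : g ≠ 0) (P Q : A) :
    g⁻¹ • pencilAdjugate a b t P Q =
      1 - (a * (1 + b) / g) • P - ((1 + a) * b / g) • Q + (a * b / g) • (P * Q + Q * P) := by
  simp only [pencilAdjugate, ← hg, smul_add, smul_sub, smul_smul, inv_mul_cancel₀ hg0, one_smul,
    div_eq_inv_mul]

end PencilAdjugate

theorem inverse_of_one_add_rank_one_projections_general {F m : Type*} [Field F] [Fintype m]
    [DecidableEq m] {P Q : Matrix m m F} (hP : IsIdempotentElem P) (hQ : IsIdempotentElem Q)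
    (hPrank : P.rank ≤ 1) (hQrank : Q.rank ≤ 1) {a b g : F}
    (hg : g = (1 + a) * (1 + b) - a * b * (P * Q).trace) (hg0 : g ≠ 0) :
    (1 + a • P + b • Q) * (1 - (a * (1 + b) / g) • P - ((1 + a) * b / g) • Q
        + (a * b / g) • (P * Q + Q * P)) = 1 ∧
    (1 - (a * (1 + b) / g) • P - ((1 + a) * b / g) • Q
        + (a * b / g) • (P * Q + Q * P)) * (1 + a • P + b • Q) = 1 := by
  have hPQP : P * Q * P = (P * Q).trace • P :=
    mul_mul_self_eq_trace_smul_of_rank_le_one hPrank Q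
  have hQPQ : Q * P * Q = (P * Q).trace • Q := by
    rw [trace_mul_comm, mul_mul_self_eq_trace_smul_of_rank_le_one hQrank P]
  rw [← inv_smul_pencilAdjugate hg hg0]
  have hright : (1 + a • P + b • Q) * g⁻¹ • pencilAdjugate a b (P * Q).trace P Q = 1 := by
    rw [Matrix.mul_smul, one_add_smul_add_smul_mul_pencilAdjugate a b hP hQ hPQP hQPQ, ← hg,
      inv_smul_smul₀ hg0]
  exact ⟨hright, mul_eq_one_comm.mp hright⟩

/-- explicit inverse of `1ₘ + α X1 K + β X2 K` for rank-one `K`-projections. -/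
theorem inverse_of_one_add_rank_one_projections
    (m n : ℕ) (hm : 0 < m) (hn : 0 < n)
    (K : Matrix (Fin n) (Fin m) ℝ) (hK : K.rank = min n m)
    (X1 X2 : Mat m n) (hX1 : InS K X1) (hX2 : InS K X2)
    (a b g : ℝ)
    (hg : g = (1 + a) * (1 + b) - a * b * (X1 * K * X2 * K).trace)
    (hg0 : g ≠ 0)
    (Minv : Matrix (Fin m) (Fin m) ℝ)
    (hMinv : Minv = 1 - (a * (1 + b) / g) • (X1 * K) - ((1 + a) * b / g) • (X2 * K)
        + (a * b / g) • (X1 * K * X2 * K + X2 * K * X1 * K)) :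
    (1 + a • (X1 * K) + b • (X2 * K)) * Minv = 1 ∧
    Minv * (1 + a • (X1 * K) + b • (X2 * K)) = 1 := by
  rw [Matrix.mul_assoc (X1 * K)] at hg
  rw [hMinv, Matrix.mul_assoc (X1 * K), Matrix.mul_assoc (X2 * K)]
  exact inverse_of_one_add_rank_one_projections_general
    (isIdempotentElem_mul_of_mul_mul_self_eq hX1.1) (isIdempotentElem_mul_of_mul_mul_self_eq hX2.1)
    ((rank_mul_le_left X1 K).trans hX1.2.le) ((rank_mul_le_left X2 K).trans hX2.2.le) hg hg0
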